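/- arXiv:1205.2807 — 3 statements merged into one kernel-verified Lean document; each statement's English description precedes it below -/
import Mathlib

section
/- For every real number D with 0 ≤ D ≤ 1/2, one has Real.sqrt(D/2) / (1/2 + D) ≥ Real.sqrt(D(1-D)), with strict inequality for 0 < D < 1/2. -/
/-!
After squaring and cancelling `D`, the claim becomes `(1 - D) * (1/2 + D) ^ 2 ≤ 1/2`. This is AM-GM
for the three numbers `2 * (1 - D)`, `1/2 + D`, `1/2 + D`, whose sum is `3` and which are all equal
exactly when `D = 1/2`; the defect factors as `(D + 1) * (1/2 - D) ^ 2`.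
-/

section SqrtDiv

variable {x y c : ℝ}

theorem sqrt_mul_eq_sqrt_mul_sq (x : ℝ) (hc : 0 ≤ c) : √x * c = √(x * c ^ 2) := by
  rw [Real.sqrt_mul' x (sq_nonneg c), Real.sqrt_sq hc]

theorem sqrt_le_sqrt_div_iff (hy : 0 ≤ y) (hc : 0 < c) : √x ≤ √y / c ↔ x * c ^ 2 ≤ y := by
  rw [le_div_iff₀ hc, sqrt_mul_eq_sqrt_mul_sq x hc.le, Real.sqrt_le_sqrt_iff hy]

theorem sqrt_lt_sqrt_div_iff (hx : 0 ≤ x) (hc : 0 < c) : √x < √y / c ↔ x * c ^ 2 < y := by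
  rw [lt_div_iff₀ hc, sqrt_mul_eq_sqrt_mul_sq x hc.le, Real.sqrt_lt_sqrt_iff (by positivity)]

end SqrtDiv

theorem half_sub_one_sub_mul_half_add_sq {K : Type*} [Field K] [NeZero (2 : K)] (t : K) :
    1 / 2 - (1 - t) * (1 / 2 + t) ^ 2 = (t + 1) * (1 / 2 - t) ^ 2 := by
  field_simp
  ring

section OrderedField

variable {K : Type*} [Field K] [LinearOrder K] [IsStrictOrderedRing K] {t : K}

theorem one_sub_mul_half_add_sq_le_half (ht : -1 ≤ t) : (1 - t) * (1 / 2 + t) ^ 2 ≤ 1 / 2 := by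
  rw [← sub_nonneg, half_sub_one_sub_mul_half_add_sq]
  exact mul_nonneg (neg_le_iff_add_nonneg.mp ht) (sq_nonneg _)

theorem one_sub_mul_half_add_sq_lt_half (ht : -1 < t) (ht_ne : t ≠ 1 / 2) :
    (1 - t) * (1 / 2 + t) ^ 2 < 1 / 2 := by
  rw [← sub_pos, half_sub_one_sub_mul_half_add_sq]
  exact mul_pos (neg_lt_iff_pos_add.mp ht) (sq_pos_of_ne_zero (sub_ne_zero.mpr ht_ne.symm))

end OrderedField

theorem match_advantage_ge_oneway_general (D : ℝ) (hD0 : 0 ≤ D) (hD1 : D ≤ 1) :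
    √(D / 2) / (1 / 2 + D) ≥ √(D * (1 - D)) ∧
    (0 < D → D ≠ 1 / 2 → √(D / 2) / (1 / 2 + D) > √(D * (1 - D))) := by
  have hc : 0 < 1 / 2 + D := by positivity
  have hx : 0 ≤ D * (1 - D) := mul_nonneg hD0 (sub_nonneg.mpr hD1)
  rw [ge_iff_le, gt_iff_lt, sqrt_le_sqrt_div_iff (by positivity) hc, sqrt_lt_sqrt_div_iff hx hc,
    mul_assoc, ← mul_one_div D 2]
  refine ⟨?_, fun hD_pos hD_ne ↦ ?_⟩
  · exact mul_le_mul_of_nonneg_left (one_sub_mul_half_add_sq_le_half (by linarith)) hD0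
  · exact mul_lt_mul_of_pos_left (one_sub_mul_half_add_sq_lt_half (by linarith) hD_ne) hD_pos

/-- Eve's two-way advantage on agreement dominates the one-way BB84 advantage:
`√(D/2)/(1/2 + D) ≥ √(D(1-D))` on `[0, 1/2]`, strictly on `(0, 1/2)`. -/
theorem match_advantage_ge_oneway (D : ℝ) (hD0 : 0 ≤ D) (hD1 : D ≤ 1/2) :
    Real.sqrt (D / 2) / (1/2 + D) ≥ Real.sqrt (D * (1 - D)) ∧
    (0 < D → D < 1/2 → Real.sqrt (D / 2) / (1/2 + D) > Real.sqrt (D * (1 - D))) :=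
  (match_advantage_ge_oneway_general D hD0 (by linarith)).imp_right
    fun hstrict hD_pos hD_lt ↦ hstrict hD_pos hD_lt.ne
end

section
/- For every real number D with 0 < D ≤ 0.087, Real.sqrt(D/2)·(3 + 2D)/(2·(1 + 2D)) > Real.sqrt(D(1-D)). -/
/-!
Both advantages are nonnegative, so they are compared through their squares. The difference of the
squares is `D / (8 (1 + 2D)²)` times the cubic `1 - 12D + 4D² + 32D³`, so the sign of this cubic
decides which strategy is better. On `D ≥ 0` the cubic decreases up to its critical point
`(√73 - 1) / 24 ≈ 0.314`, hence it suffices to evaluate it at the right end point `0.087`.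
-/

open Set

/-- The cubic whose sign decides between two-way and one-way eavesdropping at disturbance `D`; its
smallest positive root `≈ 0.0877` is the threshold disturbance. -/
def advantageCubic (D : ℝ) : ℝ := 1 - 12 * D + 4 * D ^ 2 + 32 * D ^ 3

theorem advantageCubic_strictAntiOn : StrictAntiOn advantageCubic (Icc 0 (3 / 10)) := by
  rintro a ⟨ha₀, ha₁⟩ b ⟨hb₀, hb₁⟩ hab
  have slope_pos : 0 < 12 - 4 * (a + b) - 32 * (a ^ 2 + a * b + b ^ 2) := by
    have sq_a : a ^ 2 ≤ (3 / 10) ^ 2 := by gcongr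
    have sq_b : b ^ 2 ≤ (3 / 10) ^ 2 := by gcongr
    have mul_ab : a * b ≤ 3 / 10 * (3 / 10) := by gcongr
    linarith
  have factored : advantageCubic a - advantageCubic b =
      (b - a) * (12 - 4 * (a + b) - 32 * (a ^ 2 + a * b + b ^ 2)) := by
    unfold advantageCubic
    ring
  rw [← sub_pos, factored]
  exact mul_pos (sub_pos.2 hab) slope_pos

theorem advantageCubic_pos {D : ℝ} (hD₀ : 0 ≤ D) (hD₁ : D ≤ 0.087) : 0 < advantageCubic D :=
  calc
    0 < advantageCubic 0.087 := by norm_num [advantageCubic]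
    _ ≤ advantageCubic D :=
      advantageCubic_strictAntiOn.antitoneOn ⟨hD₀, hD₁.trans (by norm_num)⟩ (by norm_num) hD₁

theorem sq_twoWay_sub_sq_oneWay {D : ℝ} (hD : 0 ≤ D) :
    (√(D / 2) * (3 + 2 * D) / (2 * (1 + 2 * D))) ^ 2 - D * (1 - D) =
      D / (8 * (1 + 2 * D) ^ 2) * advantageCubic D := by
  rw [div_pow, mul_pow, Real.sq_sqrt (by positivity), advantageCubic]
  field_simp
  ring

theorem oneWay_lt_twoWay_iff_advantageCubic_pos {D : ℝ} (hD : 0 < D) :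
    √(D * (1 - D)) < √(D / 2) * (3 + 2 * D) / (2 * (1 + 2 * D)) ↔ 0 < advantageCubic D := by
  rw [Real.sqrt_lt' (by positivity), ← sub_pos, sq_twoWay_sub_sq_oneWay hD.le]
  exact mul_pos_iff_of_pos_left (by positivity)

/-- For `0 < D ≤ 0.087`, the two-way average advantage strictly exceeds
the one-way BB84 advantage. -/
theorem twoway_beats_oneway_small_D (D : ℝ) (hD0 : 0 < D) (hD1 : D ≤ 0.087) :
    Real.sqrt (D / 2) * (3 + 2 * D) / (2 * (1 + 2 * D)) > Real.sqrt (D * (1 - D)) :=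
  (oneWay_lt_twoWay_iff_advantageCubic_pos hD0).2 (advantageCubic_pos hD0.le hD1)
end

section
/- For every real number D with 0 ≤ D ≤ 1/2, Real.sqrt(D/2)·(5 + 2D)/(4·(1 + D)) ≤ Real.sqrt(D(1-D)), with strict inequality for 0 < D < 1/2. -/
/-!
Squaring removes the square roots, and the squared advantages differ by `1 - 2 * D` times a factor
that is positive for `0 < D`. So `D = 1 / 2` is the only positive disturbance at which the two
advantages agree.
-/

/-- Eve's average advantage at disturbance `D` under two-way eavesdropping against Hadamard Bob,
written `A_E^(2,avg,H)(D)` in the paper. -/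
noncomputable def twoWayAdvantage (D : ℝ) : ℝ :=
  Real.sqrt (D / 2) * (5 + 2 * D) / (4 * (1 + D))

/-- Eve's advantage at disturbance `D` under optimal one-way symmetric incoherent eavesdropping on
BB84, written `A_E^(1)(D)` in the paper. For `1 < D` the radicand is negative and the value is
the junk value `0`. -/
noncomputable def oneWayAdvantage (D : ℝ) : ℝ :=
  Real.sqrt (D * (1 - D))

section

variable {D : ℝ}

lemma twoWayAdvantage_pos (hD : 0 < D) : 0 < twoWayAdvantage D := by
  unfold twoWayAdvantage
  positivity

lemma twoWayAdvantage_sq (hD : 0 ≤ D) :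
    twoWayAdvantage D ^ 2 = D * (5 + 2 * D) ^ 2 / (32 * (1 + D) ^ 2) := by
  rw [twoWayAdvantage, div_pow, mul_pow, Real.sq_sqrt (by positivity)]
  field_simp
  ring

lemma mul_one_sub_sub_twoWayAdvantage_sq (hD : 0 ≤ D) :
    D * (1 - D) - twoWayAdvantage D ^ 2 =
      D * (7 + 26 * D + 16 * D ^ 2) / (32 * (1 + D) ^ 2) * (1 - 2 * D) := by
  rw [twoWayAdvantage_sq hD]
  field_simp
  ring

theorem twoWayAdvantage_le_oneWayAdvantage_iff (hD : 0 < D) :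
    twoWayAdvantage D ≤ oneWayAdvantage D ↔ D ≤ 1 / 2 := by
  have factor_pos : 0 < D * (7 + 26 * D + 16 * D ^ 2) / (32 * (1 + D) ^ 2) := by positivity
  calc twoWayAdvantage D ≤ oneWayAdvantage D
    _ ↔ twoWayAdvantage D ^ 2 ≤ D * (1 - D) := Real.le_sqrt' (twoWayAdvantage_pos hD)
    _ ↔ 0 ≤ 1 - 2 * D := by
      rw [← sub_nonneg, mul_one_sub_sub_twoWayAdvantage_sq hD.le,
        mul_nonneg_iff_of_pos_left factor_pos]
    _ ↔ D ≤ 1 / 2 := by constructor <;> intro h <;> linarith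

theorem twoWayAdvantage_lt_oneWayAdvantage_iff (hD : 0 < D) :
    twoWayAdvantage D < oneWayAdvantage D ↔ D < 1 / 2 := by
  have factor_pos : 0 < D * (7 + 26 * D + 16 * D ^ 2) / (32 * (1 + D) ^ 2) := by positivity
  calc twoWayAdvantage D < oneWayAdvantage D
    _ ↔ twoWayAdvantage D ^ 2 < D * (1 - D) := Real.lt_sqrt (twoWayAdvantage_pos hD).le
    _ ↔ 0 < 1 - 2 * D := by
      rw [← sub_pos, mul_one_sub_sub_twoWayAdvantage_sq hD.le, mul_pos_iff_of_pos_left factor_pos]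
    _ ↔ D < 1 / 2 := by constructor <;> intro h <;> linarith

end

/-- Against Hadamard Bob, the two-way average advantage never exceeds the one-way
BB84 advantage: `√(D/2)(5+2D)/(4(1+D)) ≤ √(D(1-D))` on `[0, 1/2]`, strictly
on `(0, 1/2)`. -/
theorem hadamard_twoway_le_oneway (D : ℝ) (hD0 : 0 ≤ D) (hD1 : D ≤ 1/2) :
    Real.sqrt (D / 2) * (5 + 2 * D) / (4 * (1 + D)) ≤ Real.sqrt (D * (1 - D)) ∧
    (0 < D → D < 1/2 →
      Real.sqrt (D / 2) * (5 + 2 * D) / (4 * (1 + D)) < Real.sqrt (D * (1 - D))) := by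
  rcases hD0.eq_or_lt with rfl | hD
  · simp
  · exact ⟨(twoWayAdvantage_le_oneWayAdvantage_iff hD).2 hD1,
      fun _ hlt ↦ (twoWayAdvantage_lt_oneWayAdvantage_iff hD).2 hlt⟩
end
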